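/- arXiv:0712.3628 — 2 statements merged into one kernel-verified Lean document; each statement's English description precedes it below -/
import Mathlib

section
/- Let ω = e^{2πi/3} and let R be the span of the six 3 × 4 complex matrices R₁ = [[0,0,0,0],[1,0,0,0],[0,1,0,0]], R₂ = [[1,0,0,0],[0,1,0,0],[0,0,1,0]], R₃ = [[1,0,0,0],[0,ω,0,0],[0,0,ω²,0]], R₄ = [[0,1,0,0],[0,0,ω²,0],[0,0,0,ω]], R₅ = [[0,0,1,0],[0,0,0,−1],[0,0,0,0]], R₆ = [[0,0,0,1],[0,0,0,0],[−1,0,0,0]]. Then R contains no nonzero matrix of rank at most 1. -/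
open Matrix

/-!
Grade the position `(i, j)` of a `3 × 4` matrix by `j - i` modulo `5`. The six generators are
homogeneous of degrees `-1, 0, 0, 1, 2, 3`, so each graded piece of an element of their span is
determined by one entry, the others being that entry times some `± ωᵏ`; the exception is the main
diagonal `p, q, r`, whose only constraint is the linear relation `p + ω q + ω² r = 0`. If all
`2 × 2` minors vanish, then those through the corner `(0, 3)` combine with this relation to give
`2 f d² = 0` for the entries `f` at `(0, 3)` and `d` at `(0, 1)`. One of these minors reads
`f² = -ω p d`, so `f⁵ = ω² p² (f d²) = 0`. The remaining graded pieces vanish one after the other,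
the main diagonal last: `p q = p r = q r = 0` and the linear relation force `p = q = r = 0`.
-/

section Minors

variable {R : Type*} [CommRing R] [IsDomain R] {m n : Type*} [Fintype n]

theorem det_submatrix_eq_zero_of_rank_lt {ι : Type*} [Fintype ι] [DecidableEq ι]
    {A : Matrix m n R} (hA : A.rank < Fintype.card ι) (r : ι → m) (c : ι → n) :
    (A.submatrix r c).det = 0 := by
  by_contra hdet
  have hcard : (A.submatrix r c).rank = Fintype.card ι := rank_of_det_ne_zero hdet
  exact (hcard ▸ rank_submatrix_le A r c).not_gt hA

theorem apply_mul_apply_eq_of_rank_le_one {A : Matrix m n R} (hA : A.rank ≤ 1)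
    (i j : m) (k l : n) : A i k * A j l = A i l * A j k := by
  have hdet := det_submatrix_eq_zero_of_rank_lt (ι := Fin 2) (by simpa using Nat.lt_succ_of_le hA)
    ![i, j] ![k, l]
  rw [det_fin_two] at hdet
  exact sub_eq_zero.mp hdet

end Minors

section CubeRoot

variable {R : Type*} [CommRing R] {ω : R}

theorem one_add_add_sq_eq_zero_of_isPrimitiveRoot [IsDomain R] (hω : IsPrimitiveRoot ω 3) :
    1 + ω + ω ^ 2 = 0 := by
  simpa [Finset.sum_range_succ] using hω.geom_sum_eq_zero (by norm_num)

theorem cube_eq_one_of_one_add_add_sq_eq_zero (hω : 1 + ω + ω ^ 2 = 0) : ω ^ 3 = 1 := by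
  linear_combination (ω - 1) * hω

end CubeRoot

section EntangledSpan

variable {R : Type*} [CommRing R] {ω p q r a d e f : R}

/-- The span of the six matrices of the theorem, over any commutative ring and for any parameter
`ω`; for `ω` a primitive cube root of unity in `ℂ` it is a completely entangled subspace. -/
def entangledSpan (ω : R) : Submodule R (Matrix (Fin 3) (Fin 4) R) :=
  Submodule.span R
    {!![0,0,0,0; 1,0,0,0; 0,1,0,0],
      !![1,0,0,0; 0,1,0,0; 0,0,1,0],
      !![1,0,0,0; 0,ω,0,0; 0,0,ω^2,0],
      !![0,1,0,0; 0,0,ω^2,0; 0,0,0,ω],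
      !![0,0,1,0; 0,0,0,-1; 0,0,0,0],
      !![0,0,0,1; 0,0,0,0; -1,0,0,0]}

/-- The shape of the elements of `entangledSpan ω`: `p, q, r` are the entries on the main diagonal,
and `a, d, e, f` are the coefficients of the first, fourth, fifth and sixth generators. Not every
such matrix is in the span: the diagonal also satisfies `p + ω * q + ω ^ 2 * r = 0`. -/
def entangledForm (ω p q r a d e f : R) : Matrix (Fin 3) (Fin 4) R :=
  !![p, d, e, f; a, q, ω ^ 2 * d, -e; -f, a, r, ω * d]

theorem exists_eq_entangledForm (hω : 1 + ω + ω ^ 2 = 0) {M : Matrix (Fin 3) (Fin 4) R}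
    (hM : M ∈ entangledSpan ω) :
    ∃ p q r a d e f, p + ω * q + ω ^ 2 * r = 0 ∧ M = entangledForm ω p q r a d e f := by
  simp only [entangledSpan, Submodule.mem_span_insert, Submodule.mem_span_singleton] at hM
  obtain ⟨a, _, ⟨b, _, ⟨c, _, ⟨d, _, ⟨e, _, ⟨f, rfl⟩, rfl⟩, rfl⟩, rfl⟩, rfl⟩, rfl⟩ := hM
  refine ⟨b + c, b + ω * c, b + ω ^ 2 * c, a, d, e, f, ?_, ?_⟩
  · linear_combination (b + c * (1 - ω + ω ^ 2)) * hω
  · ext i j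
    fin_cases i <;> fin_cases j <;> simp [entangledForm, mul_comm]

theorem diagonal_eq_zero_of_mul_eq_zero [IsReduced R] (hω : 1 + ω + ω ^ 2 = 0)
    (hdiag : p + ω * q + ω ^ 2 * r = 0) (hpq : p * q = 0) (hpr : p * r = 0) (hqr : q * r = 0) :
    p = 0 ∧ q = 0 ∧ r = 0 := by
  have hω3 := cube_eq_one_of_one_add_add_sq_eq_zero hω
  have hpp : p ^ 2 = 0 := by linear_combination p * hdiag - ω * hpq - ω ^ 2 * hpr
  have hqq : q ^ 2 = 0 := by
    linear_combination ω ^ 2 * (q * hdiag - hpq - ω ^ 2 * hqr) - q ^ 2 * hω3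
  have hrr : r ^ 2 = 0 := by linear_combination ω * (r * hdiag - hpr - ω * hqr) - r ^ 2 * hω3
  exact ⟨eq_zero_of_pow_eq_zero hpp, eq_zero_of_pow_eq_zero hqq, eq_zero_of_pow_eq_zero hrr⟩

variable [IsDomain R]

theorem corner_eq_zero_of_rank_entangledForm_le_one [NeZero (2 : R)] (hω : 1 + ω + ω ^ 2 = 0)
    (hdiag : p + ω * q + ω ^ 2 * r = 0) (hrank : (entangledForm ω p q r a d e f).rank ≤ 1) :
    f = 0 := by
  have minor := apply_mul_apply_eq_of_rank_le_one hrank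
  have hpd : p * (ω * d) = f * -f := minor 0 2 0 3
  have hpe : p * -e = f * a := minor 0 1 0 3
  have hdd : d * (ω * d) = f * a := minor 0 2 1 3
  have hde : d * -e = f * q := minor 0 1 1 3
  have hed : e * (ω * d) = f * r := minor 0 2 2 3
  have hee : e * -e = f * (ω ^ 2 * d) := minor 0 1 2 3
  have hω3 := cube_eq_one_of_one_add_add_sq_eq_zero hω
  have hfp : f * p = (ω - 1) * (d * e) := by
    linear_combination f * hdiag + ω * hde + ω ^ 2 * hed - d * e * hω3
  have hfpe : f * p * e = -(ω * (f * d ^ 2)) := by linear_combination f * (hdd - hpe)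
  have h2fdd : 2 * (f * d ^ 2) = 0 := by
    linear_combination -hfpe + e * hfp - (ω - 1) * d * hee + f * d ^ 2 * (hω - hω3)
  have hfdd : f * d ^ 2 = 0 := (mul_eq_zero.mp h2fdd).resolve_left two_ne_zero
  have hf5 : f ^ 5 = 0 := by
    linear_combination f * (f ^ 2 - p * ω * d) * hpd + ω ^ 2 * p ^ 2 * hfdd
  exact eq_zero_of_pow_eq_zero hf5

theorem entangledForm_eq_zero_of_rank_le_one [NeZero (2 : R)] (hω : 1 + ω + ω ^ 2 = 0)
    (hdiag : p + ω * q + ω ^ 2 * r = 0) (hrank : (entangledForm ω p q r a d e f).rank ≤ 1) :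
    entangledForm ω p q r a d e f = 0 := by
  obtain rfl : f = 0 := corner_eq_zero_of_rank_entangledForm_le_one hω hdiag hrank
  have minor := apply_mul_apply_eq_of_rank_le_one hrank
  have hω3 := cube_eq_one_of_one_add_add_sq_eq_zero hω
  obtain rfl : d = 0 := by
    have hdd : d * (ω * d) = 0 := by simpa [entangledForm] using minor 0 2 1 3
    exact eq_zero_of_pow_eq_zero (n := 2) (by linear_combination ω ^ 2 * hdd - d ^ 2 * hω3)
  obtain rfl : e = 0 := by simpa [entangledForm] using minor 0 1 2 3
  obtain rfl : a = 0 := by simpa [entangledForm] using minor 1 2 0 1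
  have hpq : p * q = 0 := by simpa [entangledForm] using minor 0 1 0 1
  have hpr : p * r = 0 := by simpa [entangledForm] using minor 0 2 0 2
  have hqr : q * r = 0 := by simpa [entangledForm] using minor 1 2 1 2
  obtain ⟨rfl, rfl, rfl⟩ := diagonal_eq_zero_of_mul_eq_zero hω hdiag hpq hpr hqr
  ext i j
  fin_cases i <;> fin_cases j <;> simp [entangledForm]

end EntangledSpan

theorem stmt4_general {R : Type*} [CommRing R] [IsDomain R] [NeZero (2 : R)] {ω : R}
    (hω : 1 + ω + ω ^ 2 = 0) : ∀ M ∈ entangledSpan ω, M ≠ 0 → ¬ (M.rank ≤ 1) := by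
  intro M hM hM0 hrank
  obtain ⟨p, q, r, a, d, e, f, hdiag, rfl⟩ := exists_eq_entangledForm hω hM
  exact hM0 (entangledForm_eq_zero_of_rank_le_one hω hdiag hrank)

/-- with `ω = e^{2πi/3}`, the span `R` of the six given `3 × 4` complex
matrices contains no nonzero matrix of rank at most 1. -/
theorem stmt4 (ω : ℂ) (hω : ω = Complex.exp (2 * Real.pi * Complex.I / 3)) :
    ∀ M ∈ Submodule.span ℂ
      ({!![0,0,0,0; 1,0,0,0; 0,1,0,0],
        !![1,0,0,0; 0,1,0,0; 0,0,1,0],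
        !![1,0,0,0; 0,ω,0,0; 0,0,ω^2,0],
        !![0,1,0,0; 0,0,ω^2,0; 0,0,0,ω],
        !![0,0,1,0; 0,0,0,-1; 0,0,0,0],
        !![0,0,0,1; 0,0,0,0; -1,0,0,0]} : Set (Matrix (Fin 3) (Fin 4) ℂ)),
      M ≠ 0 → ¬ (M.rank ≤ 1) := by
  have hprim : IsPrimitiveRoot ω 3 := hω ▸ mod_cast Complex.isPrimitiveRoot_exp 3 three_ne_zero
  exact stmt4_general (one_add_add_sq_eq_zero_of_isPrimitiveRoot hprim)
end

section
/- Let ω = e^{2πi/3} and let S₀ be the span of the five 3 × 4 complex matrices S₁ = [[0,0,0,0],[1,0,0,0],[0,−1,0,0]], S₂ = [[1,0,0,0],[0,ω²,0,0],[0,0,ω,0]], S₃ = [[0,1,0,0],[0,0,1,0],[0,0,0,1]], S₄ = [[0,1,0,0],[0,0,ω,0],[0,0,0,ω²]], S₅ = [[0,0,1,0],[0,0,0,1],[0,0,0,0]]. Then S₀ contains no nonzero matrix of rank at most 1. -/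
/-!
Call the entries with `j - i = t` the `t`-th diagonal. If a matrix of rank at most one vanishes
above its `t`-th diagonal, then that diagonal has at most one nonzero entry: in a `2 × 2` minor
through two entries of the diagonal, one of the two remaining entries lies above it.

Each of the five given matrices lives on a single diagonal. So it is enough to see, for one diagonal
at a time from the top, that a nonzero combination of the generators on it has at least two nonzero
entries. On the diagonal `t = 1` the entries are `c + d`, `c + d * ω` and `c + d * ω ^ 2`, the
values of an affine function at three distinct points, so at most one of them is zero.
-/

open Matrix

section RankOne

/-- The matrix `M` is zero strictly above its `t`-th diagonal `j - i = t`. The index `t` is an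
integer, so that diagonals below the main one are allowed. -/
def VanishesAboveDiagonal {R : Type*} [Zero R] {m n : ℕ} (M : Matrix (Fin m) (Fin n) R) (t : ℤ) :
    Prop :=
  ∀ (i : Fin m) (j : Fin n), (i : ℤ) + t < j → M i j = 0

variable {R : Type*} [CommRing R] [IsDomain R]

theorem det_submatrix_eq_zero_of_rank_lt_s7 {m n o : Type*} [Fintype n] [Fintype o] [DecidableEq o]
    {M : Matrix m n R} (h : M.rank < Fintype.card o) (r : o → m) (s : o → n) :
    (M.submatrix r s).det = 0 := by
  by_contra hdet
  exact (M.rank_submatrix_le r s).not_gt (rank_of_det_ne_zero hdet ▸ h)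

theorem mul_eq_mul_of_rank_le_one {m n : Type*} [Fintype n] {M : Matrix m n R}
    (h : M.rank ≤ 1) (i k : m) (j l : n) : M i j * M k l = M i l * M k j := by
  have hdet : (M.submatrix ![i, k] ![j, l]).det = 0 :=
    det_submatrix_eq_zero_of_rank_lt_s7 (by simpa using Nat.lt_succ_of_le h) _ _
  rw [det_fin_two] at hdet
  exact sub_eq_zero.mp hdet

theorem VanishesAboveDiagonal.mul_eq_zero_of_rank_le_one {m n : ℕ}
    {M : Matrix (Fin m) (Fin n) R} {t : ℤ} (hM : VanishesAboveDiagonal M t) (h : M.rank ≤ 1)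
    {i k : Fin m} {j l : Fin n} (hik : i ≠ k) (hij : (j : ℤ) = i + t) (hkl : (l : ℤ) = k + t) :
    M i j * M k l = 0 := by
  rw [mul_eq_mul_of_rank_le_one h]
  rcases hik.lt_or_gt with hlt | hgt
  · rw [hM i l (by omega), zero_mul]
  · rw [hM k j (by omega), mul_zero]

end RankOne

section Affine

variable {R : Type*} [CommRing R] [NoZeroDivisors R] {c d x y z : R}

theorem eq_zero_of_affine_eq_zero (hxy : x ≠ y) (hx : c + d * x = 0) (hy : c + d * y = 0) :
    c = 0 ∧ d = 0 := by
  have hd : d = 0 := by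
    have hmul : d * (x - y) = 0 := by linear_combination hx - hy
    exact (mul_eq_zero.mp hmul).resolve_right (sub_ne_zero.mpr hxy)
  exact ⟨by simpa [hd] using hx, hd⟩

theorem eq_zero_of_affine_mul_eq_zero (hxy : x ≠ y) (hxz : x ≠ z) (hyz : y ≠ z)
    (h₁ : (c + d * x) * (c + d * y) = 0) (h₂ : (c + d * x) * (c + d * z) = 0)
    (h₃ : (c + d * y) * (c + d * z) = 0) : c = 0 ∧ d = 0 := by
  rcases mul_eq_zero.mp h₁ with hx | hy
  · rcases mul_eq_zero.mp h₃ with hy | hz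
    · exact eq_zero_of_affine_eq_zero hxy hx hy
    · exact eq_zero_of_affine_eq_zero hxz hx hz
  · rcases mul_eq_zero.mp h₂ with hx | hz
    · exact eq_zero_of_affine_eq_zero hxy hx hy
    · exact eq_zero_of_affine_eq_zero hyz hy hz

end Affine

section Combination

variable {R : Type*} [CommRing R]

/-- The linear combination `a S₁ + b S₂ + c S₃ + d S₄ + e S₅` of the five generators of `S₀`,
written out entrywise so that its diagonals can be read off. -/
def combination (ω a b c d e : R) : Matrix (Fin 3) (Fin 4) R :=
  !![b, c + d, e, 0;
     a, b * ω ^ 2, c + d * ω, e;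
     0, -a, b * ω, c + d * ω ^ 2]

theorem combination_zero (ω : R) : combination ω 0 0 0 0 0 = 0 := by
  ext i j
  fin_cases i <;> fin_cases j <;> simp [combination]

theorem exists_eq_combination_of_mem_span {ω : R} {M : Matrix (Fin 3) (Fin 4) R}
    (hM : M ∈ Submodule.span R
      ({!![0,0,0,0; 1,0,0,0; 0,-1,0,0],
        !![1,0,0,0; 0,ω^2,0,0; 0,0,ω,0],
        !![0,1,0,0; 0,0,1,0; 0,0,0,1],
        !![0,1,0,0; 0,0,ω,0; 0,0,0,ω^2],
        !![0,0,1,0; 0,0,0,1; 0,0,0,0]} : Set (Matrix (Fin 3) (Fin 4) R))) :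
    ∃ a b c d e, M = combination ω a b c d e := by
  simp only [Submodule.mem_span_insert, Submodule.mem_span_singleton] at hM
  obtain ⟨a, _, ⟨b, _, ⟨c, _, ⟨d, _, ⟨e, rfl⟩, rfl⟩, rfl⟩, rfl⟩, rfl⟩ := hM
  exact ⟨a, b, c, d, e, by simp [combination]⟩

theorem vanishesAboveDiagonal_combination_two (ω a b c d e : R) :
    VanishesAboveDiagonal (combination ω a b c d e) 2 := by
  intro i j hij
  fin_cases i <;> fin_cases j <;> simp [combination] at hij ⊢

theorem vanishesAboveDiagonal_combination_one (ω a b c d : R) :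
    VanishesAboveDiagonal (combination ω a b c d 0) 1 := by
  intro i j hij
  fin_cases i <;> fin_cases j <;> simp [combination] at hij ⊢

theorem vanishesAboveDiagonal_combination_zero (ω a b : R) :
    VanishesAboveDiagonal (combination ω a b 0 0 0) 0 := by
  intro i j hij
  fin_cases i <;> fin_cases j <;> simp [combination] at hij ⊢

theorem vanishesAboveDiagonal_combination_neg_one (ω a : R) :
    VanishesAboveDiagonal (combination ω a 0 0 0 0) (-1) := by
  intro i j hij
  fin_cases i <;> fin_cases j <;> simp [combination] at hij ⊢

variable [IsDomain R] {ω a b c d e : R}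

theorem fifth_coeff_eq_zero_of_rank_le_one (h : (combination ω a b c d e).rank ≤ 1) : e = 0 := by
  have hmul : e * e = 0 :=
    (vanishesAboveDiagonal_combination_two ω a b c d e).mul_eq_zero_of_rank_le_one h
      (i := 0) (j := 2) (k := 1) (l := 3) (by decide) rfl rfl
  exact mul_self_eq_zero.mp hmul

theorem third_fourth_coeff_eq_zero_of_rank_le_one (hω₀ : ω ≠ 0) (hω : ω ^ 2 ≠ 1)
    (h : (combination ω a b c d 0).rank ≤ 1) : c = 0 ∧ d = 0 := by
  have hdiag := vanishesAboveDiagonal_combination_one ω a b c d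
  have h₀₁ : (c + d) * (c + d * ω) = 0 :=
    hdiag.mul_eq_zero_of_rank_le_one h (i := 0) (j := 1) (k := 1) (l := 2) (by decide) rfl rfl
  have h₀₂ : (c + d) * (c + d * ω ^ 2) = 0 :=
    hdiag.mul_eq_zero_of_rank_le_one h (i := 0) (j := 1) (k := 2) (l := 3) (by decide) rfl rfl
  have h₁₂ : (c + d * ω) * (c + d * ω ^ 2) = 0 :=
    hdiag.mul_eq_zero_of_rank_le_one h (i := 1) (j := 2) (k := 2) (l := 3) (by decide) rfl rfl
  have hω₁ : ω ≠ 1 := fun h₁ => hω (by rw [h₁, one_pow])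
  have hω₂ : ω ^ 2 ≠ ω := by
    rw [sq, Ne, mul_eq_left₀ hω₀]
    exact hω₁
  exact eq_zero_of_affine_mul_eq_zero hω₁.symm hω.symm hω₂.symm
    (by rwa [mul_one]) (by rwa [mul_one]) h₁₂

theorem second_coeff_eq_zero_of_rank_le_one (hω₀ : ω ≠ 0)
    (h : (combination ω a b 0 0 0).rank ≤ 1) : b = 0 := by
  have hmul : b * (b * ω ^ 2) = 0 :=
    (vanishesAboveDiagonal_combination_zero ω a b).mul_eq_zero_of_rank_le_one h
      (i := 0) (j := 0) (k := 1) (l := 1) (by decide) rfl rfl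
  simpa [hω₀] using hmul

theorem first_coeff_eq_zero_of_rank_le_one (h : (combination ω a 0 0 0 0).rank ≤ 1) : a = 0 := by
  have hmul : a * -a = 0 :=
    (vanishesAboveDiagonal_combination_neg_one ω a).mul_eq_zero_of_rank_le_one h
      (i := 1) (j := 0) (k := 2) (l := 1) (by decide) rfl rfl
  simpa using hmul

theorem combination_eq_zero_of_rank_le_one (hω₀ : ω ≠ 0) (hω : ω ^ 2 ≠ 1)
    (h : (combination ω a b c d e).rank ≤ 1) : combination ω a b c d e = 0 := by
  obtain rfl := fifth_coeff_eq_zero_of_rank_le_one h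
  obtain ⟨rfl, rfl⟩ := third_fourth_coeff_eq_zero_of_rank_le_one hω₀ hω h
  obtain rfl := second_coeff_eq_zero_of_rank_le_one hω₀ h
  obtain rfl := first_coeff_eq_zero_of_rank_le_one h
  exact combination_zero ω

end Combination

theorem stmt7_general {R : Type*} [CommRing R] [IsDomain R] {ω : R} (hω₀ : ω ≠ 0)
    (hω : ω ^ 2 ≠ 1) :
    ∀ M ∈ Submodule.span R
      ({!![0,0,0,0; 1,0,0,0; 0,-1,0,0],
        !![1,0,0,0; 0,ω^2,0,0; 0,0,ω,0],
        !![0,1,0,0; 0,0,1,0; 0,0,0,1],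
        !![0,1,0,0; 0,0,ω,0; 0,0,0,ω^2],
        !![0,0,1,0; 0,0,0,1; 0,0,0,0]} : Set (Matrix (Fin 3) (Fin 4) R)),
      M ≠ 0 → ¬ (M.rank ≤ 1) := by
  intro M hM hne hrank
  obtain ⟨a, b, c, d, e, rfl⟩ := exists_eq_combination_of_mem_span hM
  exact hne (combination_eq_zero_of_rank_le_one hω₀ hω hrank)

/-- with `ω = e^{2πi/3}`, the span `S₀` of the five given `3 × 4` complex
matrices contains no nonzero matrix of rank at most 1. -/
theorem stmt7 (ω : ℂ) (hω : ω = Complex.exp (2 * Real.pi * Complex.I / 3)) :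
    ∀ M ∈ Submodule.span ℂ
      ({!![0,0,0,0; 1,0,0,0; 0,-1,0,0],
        !![1,0,0,0; 0,ω^2,0,0; 0,0,ω,0],
        !![0,1,0,0; 0,0,1,0; 0,0,0,1],
        !![0,1,0,0; 0,0,ω,0; 0,0,0,ω^2],
        !![0,0,1,0; 0,0,0,1; 0,0,0,0]} : Set (Matrix (Fin 3) (Fin 4) ℂ)),
      M ≠ 0 → ¬ (M.rank ≤ 1) := by
  have hprim : IsPrimitiveRoot ω 3 := hω ▸ Complex.isPrimitiveRoot_exp 3 three_ne_zero
  exact stmt7_general (hprim.ne_zero three_ne_zero)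
    (hprim.pow_ne_one_of_pos_of_lt two_ne_zero (by decide))
end
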